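/- Suppose a is a stable positive integer. Then there exists K such that for all k ≥ K and all ℓ ≥ 0, ‖(a·3^k + 1)·3^ℓ‖ = ‖a‖ + 3k + 3ℓ + 1. -/

import Mathlib

/-
Call `ε(n) = n³ / 3 ^ ‖n‖ ≤ 1` the efficiency of `n`. An efficiency other than `1` is at most
`8 / 9`. Hence in an optimal product of numbers of efficiency `≠ 1` both factors are more efficient
than the product by a factor of at least `9 / 8`, while in an optimal sum `u + v` with `ε(u + v)`
bounded below the smaller summand `v` is bounded and `ε(u + v) ~ ε(u) / 3 ^ ‖v‖` as `u → ∞`. By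
induction on `N` with `(8 / 9) ^ N < x`, every positive accumulation point `x` of the efficiencies
has the form `ε(b) / 3 ^ (k + 1)`.

If `‖(a * 3 ^ k + 1) * 3 ^ ℓ‖` fell short of the asserted value by `e + 1` for arbitrarily large
`k`, the efficiencies of these numbers would strictly decrease to `ε(a) * 3 ^ e`, and so
`ε(b) = ε(a) * 3 ^ (e + k + 1)` for some `b` and `k`. But then `a * 3 ^ s = b * 3 ^ t` for some `s`
and `t`, and a stable `a` is at least as efficient as every such `b`.
-/

/-- `CanWrite n k`: `n` can be written using exactly `k` ones with `+` and `*`. -/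
inductive CanWrite : ℕ → ℕ → Prop
  | one : CanWrite 1 1
  | add {a b j k : ℕ} : CanWrite a j → CanWrite b k → CanWrite (a + b) (j + k)
  | mul {a b j k : ℕ} : CanWrite a j → CanWrite b k → CanWrite (a * b) (j + k)

/-- Integer complexity: least number of ones needed to write `n`. -/
noncomputable def cpx (n : ℕ) : ℕ := sInf {k | CanWrite n k}

/-- The defect `δ(n) = ‖n‖ − 3·log₃ n`. -/
noncomputable def defect (n : ℕ) : ℝ := (cpx n : ℝ) - 3 * Real.logb 3 n

/-- `n` is stable if `‖3^k n‖ = 3k + ‖n‖` for all `k`. -/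
def Stable (n : ℕ) : Prop := ∀ k : ℕ, cpx (3 ^ k * n) = 3 * k + cpx n

/-- Stable complexity `‖n‖_st = min_{k≥0} (‖3^k n‖ − 3k)`. -/
noncomputable def cpxSt (n : ℕ) : ℕ := sInf {m | ∃ k : ℕ, cpx (3 ^ k * n) = m + 3 * k}

/-- Stable defect `δ_st(n) = ‖n‖_st − 3·log₃ n`. -/
noncomputable def defectSt (n : ℕ) : ℝ := (cpxSt n : ℝ) - 3 * Real.logb 3 n

open Filter Topology Set

theorem CanWrite.pos {n k : ℕ} (h : CanWrite n k) : 0 < n := by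
  induction h with
  | one => exact one_pos
  | add _ _ hu _ => exact Nat.add_pos_left hu _
  | mul _ _ hu hv => exact Nat.mul_pos hu hv

theorem CanWrite.complexity_pos {n k : ℕ} (h : CanWrite n k) : 0 < k := by
  induction h with
  | one => exact one_pos
  | add _ _ hj _ => exact Nat.add_pos_left hj _
  | mul _ _ hj _ => exact Nat.add_pos_left hj _

theorem CanWrite.cpx_le {n k : ℕ} (h : CanWrite n k) : cpx n ≤ k :=
  Nat.sInf_le h

theorem canWrite_self {n : ℕ} (hn : 0 < n) : CanWrite n n := by
  induction n, hn using Nat.le_induction with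
  | base => exact .one
  | succ n _ ih => exact ih.add .one

theorem canWrite_cpx {n : ℕ} (hn : 0 < n) : CanWrite n (cpx n) :=
  Nat.sInf_mem (s := {k | CanWrite n k}) ⟨n, canWrite_self hn⟩

theorem cpx_pos {n : ℕ} (hn : 0 < n) : 0 < cpx n :=
  (canWrite_cpx hn).complexity_pos

-- The junk value `sInf ∅ = 0`.
theorem cpx_zero : cpx 0 = 0 :=
  Nat.sInf_eq_zero.2 (.inr (eq_empty_of_forall_notMem fun _ h ↦ h.pos.false))

theorem cpx_one : cpx 1 = 1 :=
  le_antisymm CanWrite.one.cpx_le (cpx_pos one_pos)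

theorem cpx_add_le {u v : ℕ} (hu : 0 < u) (hv : 0 < v) : cpx (u + v) ≤ cpx u + cpx v :=
  ((canWrite_cpx hu).add (canWrite_cpx hv)).cpx_le

theorem cpx_mul_le (u v : ℕ) : cpx (u * v) ≤ cpx u + cpx v := by
  obtain rfl | hu := u.eq_zero_or_pos
  · simp [cpx_zero]
  obtain rfl | hv := v.eq_zero_or_pos
  · simp [cpx_zero]
  exact ((canWrite_cpx hu).mul (canWrite_cpx hv)).cpx_le

theorem cpx_mul_three_pow_le (n j : ℕ) : cpx (n * 3 ^ j) ≤ cpx n + 3 * j := by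
  induction j with
  | zero => simp
  | succ j ih =>
    calc cpx (n * 3 ^ (j + 1)) = cpx (n * 3 ^ j * 3) := by rw [pow_succ, mul_assoc]
      _ ≤ cpx (n * 3 ^ j) + cpx 3 := cpx_mul_le _ _
      _ ≤ cpx n + 3 * j + 3 := Nat.add_le_add ih (canWrite_self three_pos).cpx_le
      _ = cpx n + 3 * (j + 1) := by ring

theorem cpx_mul_three_pow_add_one_mul_three_pow_le {a : ℕ} (ha : 0 < a) (k ℓ : ℕ) :
    cpx ((a * 3 ^ k + 1) * 3 ^ ℓ) ≤ cpx a + 3 * k + 3 * ℓ + 1 := by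
  have hmul := cpx_mul_three_pow_le (a * 3 ^ k + 1) ℓ
  have hadd := cpx_add_le (u := a * 3 ^ k) (by positivity) one_pos
  have hpow := cpx_mul_three_pow_le a k
  rw [cpx_one] at hadd
  lia

@[elab_as_elim]
theorem optimal_induction {P : ℕ → Prop} (zero : P 0) (one : P 1)
    (add : ∀ u v, 0 < u → 0 < v → cpx (u + v) = cpx u + cpx v → P u → P v → P (u + v))
    (mul : ∀ u v, 0 < u → 0 < v → cpx (u * v) = cpx u + cpx v → P u → P v → P (u * v))
    (n : ℕ) : P n := by
  obtain rfl | hn := n.eq_zero_or_pos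
  · exact zero
  suffices ∀ k, CanWrite n k → k ≤ cpx n → P n from this _ (canWrite_cpx hn) le_rfl
  intro k h
  clear hn
  induction h with
  | one => exact fun _ ↦ one
  | @add u v j k hu hv ihu ihv =>
    intro hle
    have := cpx_add_le hu.pos hv.pos
    have := hu.cpx_le
    have := hv.cpx_le
    exact add u v hu.pos hv.pos (by lia) (ihu (by lia)) (ihv (by lia))
  | @mul u v j k hu hv ihu ihv =>
    intro hle
    have := cpx_mul_le u v
    have := hu.cpx_le
    have := hv.cpx_le
    exact mul u v hu.pos hv.pos (by lia) (ihu (by lia)) (ihv (by lia))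

theorem two_le_of_two_cube_le_three_pow {k : ℕ} (h : 2 ^ 3 ≤ 3 ^ k) : 2 ≤ k := by
  by_contra! hk
  interval_cases k <;> norm_num at h

theorem nine_mul_add_cube_le {u v j k : ℕ} (hu : 0 < u) (hv : 0 < v) (hj : 0 < j) (hk : 0 < k)
    (huj : u ^ 3 ≤ 3 ^ j) (hvk : v ^ 3 ≤ 3 ^ k) (huv : u + v ≠ 3) :
    9 * (u + v) ^ 3 ≤ 8 * 3 ^ (j + k) := by
  wlog hle : u ≤ v generalizing u v j k
  · rw [add_comm u, add_comm j]
    exact this hv hu hk hj hvk huj (by lia) (by lia)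
  obtain ⟨rfl, rfl⟩ | ⟨rfl, rfl⟩ | ⟨rfl, hv3⟩ | ⟨hu2, hv3⟩ :
      u = 1 ∧ v = 1 ∨ u = 2 ∧ v = 2 ∨ u = 1 ∧ 3 ≤ v ∨ 2 ≤ u ∧ 3 ≤ v := by lia
  · have : 3 ^ 2 ≤ 3 ^ (j + k) := Nat.pow_le_pow_right three_pos (by lia)
    lia
  · have := two_le_of_two_cube_le_three_pow huj
    have := two_le_of_two_cube_le_three_pow hvk
    have : 3 ^ 4 ≤ 3 ^ (j + k) := Nat.pow_le_pow_right three_pos (by lia)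
    lia
  · have hcube : (3 * (1 + v)) ^ 3 ≤ (4 * v) ^ 3 := Nat.pow_le_pow_left (by lia) 3
    have hpow : 3 ^ (1 + k) ≤ 3 ^ (j + k) := Nat.pow_le_pow_right three_pos (by lia)
    rw [mul_pow, mul_pow] at hcube
    rw [pow_add] at hpow
    lia
  · have hcube : (6 * (u + v)) ^ 3 ≤ (5 * (u * v)) ^ 3 := Nat.pow_le_pow_left (by nlinarith) 3
    have hmul : u ^ 3 * v ^ 3 ≤ 3 ^ (j + k) := pow_add 3 j k ▸ Nat.mul_le_mul huj hvk
    rw [mul_pow, mul_pow, mul_pow] at hcube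
    lia

theorem add_cube_le_three_pow {u v j k : ℕ} (hu : 0 < u) (hv : 0 < v) (hj : 0 < j) (hk : 0 < k)
    (huj : u ^ 3 ≤ 3 ^ j) (hvk : v ^ 3 ≤ 3 ^ k) : (u + v) ^ 3 ≤ 3 ^ (j + k) := by
  by_cases huv : u + v = 3
  · have hjk : 3 ≤ j + k := by
      obtain rfl | rfl : u = 2 ∨ v = 2 := by lia
      · have := two_le_of_two_cube_le_three_pow huj
        lia
      · have := two_le_of_two_cube_le_three_pow hvk
        lia
    rw [huv]
    exact Nat.pow_le_pow_right three_pos hjk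
  · have := nine_mul_add_cube_le hu hv hj hk huj hvk huv
    lia

theorem cube_le_three_pow_cpx (n : ℕ) : n ^ 3 ≤ 3 ^ cpx n := by
  induction n using optimal_induction with
  | zero => simp
  | one => simp [cpx_one]
  | add u v hu hv huv ihu ihv =>
    rw [huv]
    exact add_cube_le_three_pow hu hv (cpx_pos hu) (cpx_pos hv) ihu ihv
  | mul u v _ _ huv ihu ihv =>
    rw [huv, mul_pow, pow_add]
    exact Nat.mul_le_mul ihu ihv

theorem three_mul_le_cpx_of_three_pow_le {m n : ℕ} (h : 3 ^ m ≤ n) : 3 * m ≤ cpx n := by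
  refine (Nat.pow_le_pow_iff_right (a := 3) (by norm_num)).1 ?_
  calc 3 ^ (3 * m) = (3 ^ m) ^ 3 := pow_mul' 3 3 m
    _ ≤ n ^ 3 := Nat.pow_le_pow_left h 3
    _ ≤ 3 ^ cpx n := cube_le_three_pow_cpx n

theorem cpx_three : cpx 3 = 3 :=
  le_antisymm (canWrite_self three_pos).cpx_le (three_mul_le_cpx_of_three_pow_le (m := 1) le_rfl)

theorem le_cpx_mul_three_pow_add_one_mul_three_pow {a : ℕ} (ha : 0 < a) (k ℓ : ℕ) :
    3 * (k + ℓ) ≤ cpx ((a * 3 ^ k + 1) * 3 ^ ℓ) := by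
  refine three_mul_le_cpx_of_three_pow_le ?_
  rw [pow_add]
  gcongr
  exact Nat.le_succ_of_le (Nat.le_mul_of_pos_left _ ha)

/-- The ratio `n³ / 3 ^ ‖n‖ = 3 ^ (-δ(n))`, where `δ` is the defect; it replaces `δ` so as to avoid
logarithms. Note that `efficiency 0 = 0`. -/
noncomputable def efficiency (n : ℕ) : ℝ := (n : ℝ) ^ 3 / 3 ^ cpx n

theorem efficiency_zero : efficiency 0 = 0 := by
  simp [efficiency]

theorem efficiency_nonneg (n : ℕ) : 0 ≤ efficiency n := by
  unfold efficiency
  positivity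

theorem efficiency_pos {n : ℕ} : 0 < efficiency n ↔ 0 < n := by
  refine ⟨fun h ↦ Nat.pos_of_ne_zero ?_, fun h ↦ by unfold efficiency; positivity⟩
  rintro rfl
  exact h.ne' efficiency_zero

theorem efficiency_le_one (n : ℕ) : efficiency n ≤ 1 := by
  rw [efficiency, div_le_one (by positivity)]
  exact_mod_cast cube_le_three_pow_cpx n

theorem efficiency_mul {u v : ℕ} (h : cpx (u * v) = cpx u + cpx v) :
    efficiency (u * v) = efficiency u * efficiency v := by
  rw [efficiency, efficiency, efficiency, h, pow_add, div_mul_div_comm, Nat.cast_mul, mul_pow]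

theorem efficiency_add {u v : ℕ} (hu : 0 < u) (h : cpx (u + v) = cpx u + cpx v) :
    efficiency (u + v) = efficiency u * ((1 + v / u) ^ 3 / 3 ^ cpx v) := by
  rw [efficiency, efficiency, h, pow_add, Nat.cast_add]
  field_simp

theorem exists_efficiency_mul_efficiency_eq (u v : ℕ) :
    ∃ d : ℕ, efficiency u * efficiency v = efficiency (u * v) / 3 ^ d := by
  obtain ⟨d, hd⟩ := Nat.exists_eq_add_of_le (cpx_mul_le u v)
  refine ⟨d, ?_⟩
  rw [efficiency, efficiency, efficiency, div_mul_div_comm, div_div, ← pow_add, ← pow_add, hd,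
    Nat.cast_mul, mul_pow]

theorem efficiency_le_efficiency_mul_three_pow (n j : ℕ) :
    efficiency n ≤ efficiency (n * 3 ^ j) := by
  have hpow : (3 : ℝ) ^ cpx (n * 3 ^ j) ≤ 3 ^ cpx n * 3 ^ (3 * j) := by
    rw [← pow_add]
    exact pow_le_pow_right₀ (by norm_num) (cpx_mul_three_pow_le n j)
  calc efficiency n = ((n * 3 ^ j : ℕ) : ℝ) ^ 3 / (3 ^ cpx n * 3 ^ (3 * j)) := by
        rw [efficiency, Nat.cast_mul, mul_pow, Nat.cast_pow, ← pow_mul', Nat.cast_ofNat,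
          mul_div_mul_right _ _ (by positivity)]
    _ ≤ efficiency (n * 3 ^ j) := div_le_div_of_nonneg_left (by positivity) (by positivity) hpow

theorem efficiency_eq_one_or_le (n : ℕ) : efficiency n = 1 ∨ efficiency n ≤ 8 / 9 := by
  induction n using optimal_induction with
  | zero => norm_num [efficiency_zero]
  | one => norm_num [efficiency, cpx_one]
  | add u v hu hv huv _ _ =>
    by_cases h3 : u + v = 3
    · norm_num [h3, efficiency, cpx_three]
    · have := nine_mul_add_cube_le hu hv (cpx_pos hu) (cpx_pos hv) (cube_le_three_pow_cpx u)
        (cube_le_three_pow_cpx v) h3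
      rw [efficiency, huv, div_le_div_iff₀ (by positivity) (by norm_num), mul_comm]
      exact .inr (by exact_mod_cast this)
  | mul u v _ _ huv ihu ihv =>
    rw [efficiency_mul huv]
    obtain hu | hu := ihu
    · rwa [hu, one_mul]
    · exact .inr ((mul_le_of_le_one_right (efficiency_nonneg u) (efficiency_le_one v)).trans hu)

theorem efficiency_cases (n : ℕ) :
    efficiency n = efficiency 1 ∨
    (∃ u v : ℕ, 0 < v ∧ v ≤ u ∧
      efficiency n = efficiency u * ((1 + v / u) ^ 3 / 3 ^ cpx v)) ∨
    ∃ u v : ℕ, efficiency u ≤ 8 / 9 ∧ efficiency v ≤ 8 / 9 ∧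
      efficiency n = efficiency u * efficiency v := by
  induction n using optimal_induction with
  | zero => exact .inr (.inr ⟨0, 0, by norm_num [efficiency_zero]⟩)
  | one => exact .inl rfl
  | add u v hu hv huv _ _ =>
    refine .inr (.inl ?_)
    obtain hle | hle := le_total v u
    · exact ⟨u, v, hv, hle, efficiency_add hu huv⟩
    · refine ⟨v, u, hu, hle, ?_⟩
      rw [add_comm u, add_comm (cpx u)] at huv
      rw [add_comm, efficiency_add hv huv]
  | mul u v _ _ huv ihu ihv =>
    rw [efficiency_mul huv]
    obtain hu1 | hu1 := efficiency_eq_one_or_le u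
    · rwa [hu1, one_mul]
    obtain hv1 | hv1 := efficiency_eq_one_or_le v
    · rwa [hv1, mul_one]
    exact .inr (.inr ⟨u, v, hu1, hv1, rfl⟩)

/-- The numbers `ε(b) / 3 ^ k`, corresponding to the translates `δ(b) + k` of the defects. -/
def scaledEfficiencies : Set ℝ := {x | ∃ b k : ℕ, x = efficiency b / 3 ^ k}

theorem efficiency_mem_scaledEfficiencies (n : ℕ) : efficiency n ∈ scaledEfficiencies :=
  ⟨n, 0, by rw [pow_zero, div_one]⟩

theorem div_three_pow_mem_scaledEfficiencies {x : ℝ} (hx : x ∈ scaledEfficiencies) (j : ℕ) :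
    x / 3 ^ j ∈ scaledEfficiencies := by
  obtain ⟨b, k, rfl⟩ := hx
  exact ⟨b, k + j, by rw [div_div, pow_add]⟩

theorem mul_mem_scaledEfficiencies {x y : ℝ} (hx : x ∈ scaledEfficiencies)
    (hy : y ∈ scaledEfficiencies) : x * y ∈ scaledEfficiencies := by
  obtain ⟨b, k, rfl⟩ := hx
  obtain ⟨c, l, rfl⟩ := hy
  obtain ⟨d, hd⟩ := exists_efficiency_mul_efficiency_eq b c
  exact ⟨b * c, d + (k + l), by rw [div_mul_div_comm, hd, div_div, ← pow_add, ← pow_add]⟩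

theorem exists_tendsto_efficiency {ι : Type*} (U : Ultrafilter ι) (u : ι → ℕ) :
    ∃ y, Tendsto (efficiency ∘ u) U (𝓝 y) := by
  obtain ⟨y, -, hy⟩ := isCompact_Icc.ultrafilter_le_nhds' (U.map (efficiency ∘ u))
    (Ultrafilter.mem_map.2 <| univ_mem' fun i ↦ ⟨efficiency_nonneg (u i), efficiency_le_one (u i)⟩)
  exact ⟨y, hy⟩

theorem eventually_eq_const_or_tendsto_atTop {ι : Type*} (U : Ultrafilter ι) (u : ι → ℕ) :
    (∃ c, ∀ᶠ i in U, u i = c) ∨ Tendsto u U atTop := by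
  obtain h | ⟨c, hc⟩ := (U.map u).le_cofinite_or_eq_pure
  · exact .inr (Nat.cofinite_eq_atTop ▸ h)
  · have : {c} ∈ U.map u := by rw [hc]; exact mem_pure.2 rfl
    exact .inl ⟨c, this⟩

theorem tendsto_one_add_div_cube (w : ℝ) : Tendsto (fun x : ℝ ↦ (1 + w / x) ^ 3) atTop (𝓝 1) := by
  simpa using ((tendsto_id.const_div_atTop w).const_add 1).pow 3

/-- Along an ultrafilter, efficiencies can tend to `x` without being eventually equal to `x` only
if `3 * x` is a scaled efficiency. -/
def LimitDichotomy (x : ℝ) : Prop :=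
  ∀ ⦃U : Ultrafilter ℕ⦄, Tendsto efficiency U (𝓝 x) →
    (∀ᶠ n in U, efficiency n = x) ∨ 3 * x ∈ scaledEfficiencies

theorem LimitDichotomy.comp {ι : Type*} {U : Ultrafilter ι} {u : ι → ℕ} {x : ℝ}
    (hx : LimitDichotomy x) (hu : Tendsto (efficiency ∘ u) U (𝓝 x)) :
    (∀ᶠ i in U, efficiency (u i) = x) ∨ 3 * x ∈ scaledEfficiencies :=
  hx (U := U.map u) (tendsto_map'_iff.2 hu)

theorem LimitDichotomy.mem_scaledEfficiencies {ι : Type*} {U : Ultrafilter ι} {u : ι → ℕ} {x : ℝ}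
    (hx : LimitDichotomy x) (hu : Tendsto (efficiency ∘ u) U (𝓝 x)) : x ∈ scaledEfficiencies := by
  obtain hconst | h3x := hx.comp hu
  · obtain ⟨i, rfl⟩ := hconst.exists
    exact efficiency_mem_scaledEfficiencies (u i)
  · simpa using div_three_pow_mem_scaledEfficiencies h3x 1

theorem LimitDichotomy.mul {ι : Type*} {U : Ultrafilter ι} {u v : ι → ℕ} {y z : ℝ}
    (hy : LimitDichotomy y) (hz : LimitDichotomy z)
    (hu : Tendsto (efficiency ∘ u) U (𝓝 y)) (hv : Tendsto (efficiency ∘ v) U (𝓝 z)) :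
    (∀ᶠ i in U, efficiency (u i) * efficiency (v i) = y * z) ∨
      3 * (y * z) ∈ scaledEfficiencies := by
  have hymem := hy.mem_scaledEfficiencies hu
  have hzmem := hz.mem_scaledEfficiencies hv
  obtain hyconst | h3y := hy.comp hu
  · obtain hzconst | h3z := hz.comp hv
    · left
      filter_upwards [hyconst, hzconst] with i hui hvi
      rw [hui, hvi]
    · rw [mul_left_comm]
      exact .inr (mul_mem_scaledEfficiencies hymem h3z)
  · rw [← mul_assoc]
    exact .inr (mul_mem_scaledEfficiencies h3y hzmem)

theorem eventually_eq_or_mem_of_eventually_mul {U : Ultrafilter ℕ} {u v : ℕ → ℕ} {x : ℝ}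
    (hx : 0 < x) (hU : Tendsto efficiency U (𝓝 x)) (ih : ∀ y, 9 / 8 * x ≤ y → LimitDichotomy y)
    (huv : ∀ᶠ n in U, efficiency (u n) ≤ 8 / 9 ∧ efficiency (v n) ≤ 8 / 9 ∧
      efficiency n = efficiency (u n) * efficiency (v n)) :
    (∀ᶠ n in U, efficiency n = x) ∨ 3 * x ∈ scaledEfficiencies := by
  obtain ⟨y, hy⟩ := exists_tendsto_efficiency U u
  obtain ⟨z, hz⟩ := exists_tendsto_efficiency U v
  have heq : ∀ᶠ n in U, efficiency n = efficiency (u n) * efficiency (v n) :=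
    huv.mono fun _ h ↦ h.2.2
  obtain rfl : x = y * z :=
    tendsto_nhds_unique hU ((hy.mul hz).congr' (heq.mono fun _ h ↦ h.symm))
  have hy_le : y ≤ 8 / 9 := le_of_tendsto hy (huv.mono fun _ h ↦ h.1)
  have hz_le : z ≤ 8 / 9 := le_of_tendsto hz (huv.mono fun _ h ↦ h.2.1)
  have hy_nonneg : 0 ≤ y := ge_of_tendsto' hy fun n ↦ efficiency_nonneg (u n)
  have hz_nonneg : 0 ≤ z := ge_of_tendsto' hz fun n ↦ efficiency_nonneg (v n)
  obtain hconst | hmem := (ih y (by nlinarith)).mul (ih z (by nlinarith)) hy hz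
  · left
    filter_upwards [heq, hconst] with n hn hn'
    rw [hn, hn']
  · exact .inr hmem

theorem efficiency_mul_one_add_div_cube_le {u v : ℕ} (hv : 0 < v) (hvu : v ≤ u) :
    efficiency u * ((1 + v / u) ^ 3 / 3 ^ cpx v) ≤ 8 / v := by
  have hratio : (v : ℝ) / u ≤ 1 := div_le_one_of_le₀ (by exact_mod_cast hvu) (by positivity)
  have hv_le : (v : ℝ) ≤ 3 ^ cpx v := by
    exact_mod_cast (Nat.le_self_pow three_ne_zero v).trans (cube_le_three_pow_cpx v)
  calc efficiency u * ((1 + v / u) ^ 3 / 3 ^ cpx v)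
      ≤ 1 * ((1 + 1) ^ 3 / (v : ℝ)) := by
        gcongr
        exact efficiency_le_one u
    _ = 8 / (v : ℝ) := by norm_num

theorem exists_eventually_summand_eq_of_eventually_add {U : Ultrafilter ℕ} {u v : ℕ → ℕ} {x : ℝ}
    (hx : 0 < x) (hU : Tendsto efficiency U (𝓝 x))
    (huv : ∀ᶠ n in U, 0 < v n ∧ v n ≤ u n ∧
      efficiency n = efficiency (u n) * ((1 + v n / u n) ^ 3 / 3 ^ cpx (v n))) :
    ∃ w, ∀ᶠ n in U, v n = w := by
  refine (eventually_eq_const_or_tendsto_atTop U v).resolve_right fun hv ↦ hx.not_ge ?_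
  have hlim : Tendsto (fun n ↦ 8 / (v n : ℝ)) U (𝓝 0) :=
    (tendsto_natCast_atTop_atTop.comp hv).const_div_atTop 8
  refine le_of_tendsto_of_tendsto hU hlim (huv.mono fun n ⟨hpos, hle, heq⟩ ↦ ?_)
  exact heq.trans_le (efficiency_mul_one_add_div_cube_le hpos hle)

theorem eventually_eq_or_mem_of_eventually_add {U : Ultrafilter ℕ} {u v : ℕ → ℕ} {x : ℝ}
    (hx : 0 < x) (hU : Tendsto efficiency U (𝓝 x)) (ih : ∀ y, 9 / 8 * x ≤ y → LimitDichotomy y)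
    (huv : ∀ᶠ n in U, 0 < v n ∧ v n ≤ u n ∧
      efficiency n = efficiency (u n) * ((1 + v n / u n) ^ 3 / 3 ^ cpx (v n))) :
    (∀ᶠ n in U, efficiency n = x) ∨ 3 * x ∈ scaledEfficiencies := by
  obtain ⟨w, hw⟩ := exists_eventually_summand_eq_of_eventually_add hx hU huv
  have heq : ∀ᶠ n in U, efficiency (u n) * ((1 + w / u n) ^ 3 / 3 ^ cpx w) = efficiency n := by
    filter_upwards [huv, hw] with n hn hwn
    rw [hn.2.2, hwn]
  obtain ⟨c, hc⟩ | hu := eventually_eq_const_or_tendsto_atTop U u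
  · have hconst : ∀ᶠ n in U, efficiency c * ((1 + w / c) ^ 3 / 3 ^ cpx w) = efficiency n := by
      filter_upwards [heq, hc] with n hn hcn
      rw [← hn, hcn]
    have hxc := tendsto_nhds_unique hU (tendsto_const_nhds.congr' hconst)
    exact .inl (hconst.mono fun n hn ↦ hn.symm.trans hxc.symm)
  · obtain ⟨y, hy⟩ := exists_tendsto_efficiency U u
    have hratio := (tendsto_one_add_div_cube w).comp (tendsto_natCast_atTop_atTop.comp hu)
    have hxy : x = y * (1 / 3 ^ cpx w) :=
      tendsto_nhds_unique hU ((hy.mul (hratio.div_const _)).congr' heq)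
    obtain ⟨j, hj⟩ : ∃ j, cpx w = j + 1 := by
      obtain ⟨n, hn, rfl⟩ := (huv.and hw).exists
      exact Nat.exists_eq_add_one.2 (cpx_pos hn.1)
    have h3x : 3 * x = y / 3 ^ j := by
      rw [hxy, hj, pow_succ]
      field_simp
    have h3xy : 3 * x ≤ y := h3x ▸ div_le_self
      (ge_of_tendsto' hy fun n ↦ efficiency_nonneg (u n)) (one_le_pow₀ (by norm_num))
    have hy_mem := (ih y (by linarith)).mem_scaledEfficiencies hy
    exact .inr (h3x ▸ div_three_pow_mem_scaledEfficiencies hy_mem j)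

theorem limitDichotomy_of_pow_lt {N : ℕ} {x : ℝ} (hx : (8 / 9) ^ N < x) : LimitDichotomy x := by
  induction N generalizing x with
  | zero =>
    intro U hU
    exact absurd (le_of_tendsto' hU efficiency_le_one) (by simpa using hx)
  | succ N ih =>
    intro U hU
    have hx0 : 0 < x := lt_trans (by positivity) hx
    have ih' (y : ℝ) (hy : 9 / 8 * x ≤ y) : LimitDichotomy y :=
      ih (by rw [pow_succ] at hx; linarith)
    have hcases : ∀ᶠ n in U, _ := .of_forall efficiency_cases
    rw [Ultrafilter.eventually_or, Ultrafilter.eventually_or] at hcases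
    obtain hone | hadd | hmul := hcases
    · have hx1 : x = efficiency 1 :=
        tendsto_nhds_unique hU (tendsto_const_nhds.congr' (hone.mono fun _ h ↦ h.symm))
      exact .inl (hx1 ▸ hone)
    · obtain ⟨u, hu⟩ := hadd.choice
      obtain ⟨v, huv⟩ := hu.choice
      exact eventually_eq_or_mem_of_eventually_add hx0 hU ih' huv
    · obtain ⟨u, hu⟩ := hmul.choice
      obtain ⟨v, huv⟩ := hu.choice
      exact eventually_eq_or_mem_of_eventually_mul hx0 hU ih' huv

theorem limitDichotomy_of_pos {x : ℝ} (hx : 0 < x) : LimitDichotomy x := by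
  obtain ⟨N, hN⟩ := exists_pow_lt_of_lt_one hx (by norm_num : (8 / 9 : ℝ) < 1)
  exact limitDichotomy_of_pow_lt hN

theorem three_mul_mem_scaledEfficiencies_of_accPt {x : ℝ} (hx : 0 < x)
    (h : AccPt x (𝓟 (range efficiency))) : 3 * x ∈ scaledEfficiencies := by
  have : NeBot (comap efficiency (𝓝[≠] x)) :=
    comap_neBot_iff_frequently.2 (accPt_iff_frequently_nhdsNE.1 h)
  let U := Ultrafilter.of (comap efficiency (𝓝[≠] x))
  obtain ⟨hU, hne⟩ := tendsto_nhdsWithin_iff.1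
    (tendsto_comap.mono_left (Ultrafilter.of_le _) : Tendsto efficiency U (𝓝[≠] x))
  refine (limitDichotomy_of_pos hx hU).resolve_left fun heq ↦ ?_
  obtain ⟨n, hn, hn'⟩ := (hne.and heq).exists
  exact hn hn'

theorem exists_mul_prime_pow_eq_of_pow {p m a b i j : ℕ} (hp : p.Prime) (hm : m ≠ 0) (ha : 0 < a)
    (h : b ^ m * p ^ i = a ^ m * p ^ j) : ∃ s t, b * p ^ s = a * p ^ t := by
  obtain ⟨m, rfl⟩ := Nat.exists_eq_add_one_of_ne_zero hm
  have hpow : (b * p ^ i) ^ (m + 1) = a ^ (m + 1) * p ^ (j + i * m) := by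
    rw [pow_add p, ← mul_assoc, ← h]
    ring
  obtain ⟨c, hc⟩ : a ∣ b * p ^ i := (Nat.pow_dvd_pow_iff hm).1 ⟨_, hpow⟩
  have hcpow : c ^ (m + 1) = p ^ (j + i * m) := by
    rw [hc, mul_pow] at hpow
    exact Nat.eq_of_mul_eq_mul_left (by positivity) hpow
  obtain ⟨t, -, rfl⟩ := (Nat.dvd_prime_pow hp).1 (hcpow ▸ dvd_pow_self c hm)
  exact ⟨i, t, hc⟩

theorem exists_mul_three_pow_eq_of_efficiency_eq {a b e : ℕ} (ha : 0 < a)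
    (h : efficiency b = efficiency a * 3 ^ e) : ∃ s t, b * 3 ^ s = a * 3 ^ t := by
  have hcube : b ^ 3 * 3 ^ cpx a = a ^ 3 * 3 ^ (cpx b + e) := by
    rw [efficiency, efficiency, div_mul_eq_mul_div, div_eq_div_iff (by positivity) (by positivity),
      mul_assoc, ← pow_add, add_comm e] at h
    exact_mod_cast h
  exact exists_mul_prime_pow_eq_of_pow Nat.prime_three three_ne_zero ha hcube

theorem Stable.efficiency_mul_three_pow {a : ℕ} (hstab : Stable a) (j : ℕ) :
    efficiency (a * 3 ^ j) = efficiency a := by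
  rw [efficiency, mul_comm, hstab j, efficiency, pow_add, Nat.cast_mul, mul_pow, Nat.cast_pow,
    ← pow_mul', Nat.cast_ofNat, mul_div_mul_left _ _ (by positivity)]

theorem Stable.eq_zero_of_efficiency_eq {a b e : ℕ} (ha : 0 < a) (hstab : Stable a)
    (h : efficiency b = efficiency a * 3 ^ e) : e = 0 := by
  obtain ⟨s, t, hst⟩ := exists_mul_three_pow_eq_of_efficiency_eq ha h
  have hle : efficiency a * 3 ^ e ≤ efficiency a * 1 :=
    calc efficiency a * 3 ^ e = efficiency b := h.symm
      _ ≤ efficiency (b * 3 ^ s) := efficiency_le_efficiency_mul_three_pow b s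
      _ = efficiency a * 1 := by rw [hst, hstab.efficiency_mul_three_pow, mul_one]
  by_contra he
  exact (le_of_mul_le_mul_left hle (efficiency_pos.2 ha)).not_gt (one_lt_pow₀ (by norm_num) he)

theorem Stable.not_accPt_efficiency_mul_three_pow {a : ℕ} (ha : 0 < a) (hstab : Stable a) (e : ℕ) :
    ¬ AccPt (efficiency a * 3 ^ e) (𝓟 (range efficiency)) := by
  intro h
  have hpos : 0 < efficiency a * 3 ^ e := mul_pos (efficiency_pos.2 ha) (by positivity)
  obtain ⟨b, k, hbk⟩ := three_mul_mem_scaledEfficiencies_of_accPt hpos h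
  have heq : efficiency b = efficiency a * 3 ^ (e + 1 + k) := by
    rw [← (eq_div_iff (by positivity)).1 hbk]
    ring
  have := hstab.eq_zero_of_efficiency_eq ha heq
  lia

theorem tendsto_mul_one_add_div_cube_nhdsNE {a : ℕ} {c : ℝ} (ha : 0 < a) (hc : 0 < c) :
    Tendsto (fun k : ℕ ↦ c * (1 + 1 / (a * 3 ^ k : ℝ)) ^ 3) atTop (𝓝[≠] c) := by
  have ha' : (0 : ℝ) < a := by exact_mod_cast ha
  have hpow : Tendsto (fun k : ℕ ↦ (a * 3 ^ k : ℝ)) atTop atTop :=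
    (tendsto_pow_atTop_atTop_of_one_lt (by norm_num)).const_mul_atTop ha'
  refine tendsto_nhdsWithin_iff.2 ⟨?_, .of_forall fun k ↦ ?_⟩
  · simpa using ((tendsto_one_add_div_cube 1).comp hpow).const_mul c
  · have : 0 < 1 / (a * 3 ^ k : ℝ) := by positivity
    exact (lt_mul_of_one_lt_right hc (one_lt_pow₀ (by linarith) three_ne_zero)).ne'

theorem Stable.eventually_notMem_range_efficiency {a : ℕ} (ha : 0 < a) (hstab : Stable a) (e : ℕ) :
    ∀ᶠ k : ℕ in atTop,
      efficiency a * 3 ^ e * (1 + 1 / (a * 3 ^ k : ℝ)) ^ 3 ∉ range efficiency := by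
  have hpos : 0 < efficiency a * 3 ^ e := mul_pos (efficiency_pos.2 ha) (by positivity)
  have hnhds := hstab.not_accPt_efficiency_mul_three_pow ha e
  rw [accPt_iff_frequently_nhdsNE, not_frequently] at hnhds
  exact (tendsto_mul_one_add_div_cube_nhdsNE ha hpos).eventually hnhds

theorem efficiency_mul_three_pow_add_one_mul_three_pow {a k ℓ e : ℕ} (ha : 0 < a)
    (h : cpx ((a * 3 ^ k + 1) * 3 ^ ℓ) + e = cpx a + 3 * k + 3 * ℓ) :
    efficiency ((a * 3 ^ k + 1) * 3 ^ ℓ) =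
      efficiency a * 3 ^ e * (1 + 1 / (a * 3 ^ k : ℝ)) ^ 3 := by
  have hpow : (3 : ℝ) ^ cpx ((a * 3 ^ k + 1) * 3 ^ ℓ) * 3 ^ e =
      3 ^ cpx a * (3 ^ k) ^ 3 * (3 ^ ℓ) ^ 3 := by
    rw [← pow_add, h, pow_add, pow_add, pow_mul', pow_mul']
  rw [efficiency, efficiency, div_eq_iff (by positivity)]
  push_cast
  field_simp
  linear_combination -hpow

theorem cpx_stable_linear (a : ℕ) (ha : 0 < a) (hstab : Stable a) :
    ∃ K : ℕ, ∀ k : ℕ, K ≤ k → ∀ ℓ : ℕ,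
      cpx ((a * 3 ^ k + 1) * 3 ^ ℓ) = cpx a + 3 * k + 3 * ℓ + 1 := by
  obtain ⟨K, hK⟩ := eventually_atTop.1 <| (eventually_all_finset (Finset.range (cpx a + 1))).2
    fun e _ ↦ hstab.eventually_notMem_range_efficiency ha e
  refine ⟨K, fun k hk ℓ ↦ ?_⟩
  by_contra hne
  have hupper := cpx_mul_three_pow_add_one_mul_three_pow_le ha k ℓ
  have hlower := le_cpx_mul_three_pow_add_one_mul_three_pow ha k ℓ
  obtain ⟨e, he⟩ : ∃ e, cpx ((a * 3 ^ k + 1) * 3 ^ ℓ) + e = cpx a + 3 * k + 3 * ℓ :=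
    Nat.le.dest (by lia)
  exact hK k hk e (Finset.mem_range.2 (by lia))
    ⟨_, efficiency_mul_three_pow_add_one_mul_three_pow ha he⟩
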